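/- arXiv:1903.03897 — 7 statements merged into one kernel-verified Lean document; each statement's English description precedes it below -/
import Mathlib

section
/- For all real x with 0 < x < 1, one has α·x·Φ(x⁴, 3/2, 1/4) < arcsl(x) < β·x·Φ(x⁴, 3/2, 1/4), where α = 1/8 and β = arcsl(1)/Φ(1, 3/2, 1/4). -/
/-- The arc lemniscate sine function: `arcsl x = ∫₀ˣ dt / √(1 - t⁴)`. -/
noncomputable def arcsl (x : ℝ) : ℝ := ∫ t in (0:ℝ)..x, 1 / Real.sqrt (1 - t ^ 4)

/-- The Lerch zeta function: `Φ(z, s, a) = ∑ₖ zᵏ / (k + a)ˢ`. -/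
noncomputable def lerchPhi (z s a : ℝ) : ℝ := ∑' k : ℕ, z ^ k / ((k : ℝ) + a) ^ s

open MeasureTheory

/-- Coefficients of `(1-u)^(-1/2)`. -/
noncomputable def qc (k : ℕ) : ℝ := Ring.multichoose (1 / 2 : ℝ) k

lemma qc_zero : qc 0 = 1 := by simp [qc]

lemma qc_succ (k : ℕ) : ((k : ℝ) + 1) * qc (k + 1) = (1 / 2 + k) * qc k := by
  have h1 := Ring.factorial_nsmul_multichoose_eq_ascPochhammer (1 / 2 : ℝ) k
  have h2 := Ring.factorial_nsmul_multichoose_eq_ascPochhammer (1 / 2 : ℝ) (k + 1)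
  rw [Polynomial.ascPochhammer_smeval_eq_eval] at h1 h2
  rw [ascPochhammer_succ_eval, ← h1] at h2
  simp only [nsmul_eq_mul, Nat.factorial_succ, Nat.cast_mul, Nat.cast_add, Nat.cast_one] at h2
  have hf : (k.factorial : ℝ) ≠ 0 := by positivity
  apply mul_left_cancel₀ hf
  unfold qc
  linear_combination h2

lemma qc_pos (k : ℕ) : 0 < qc k := by
  induction k with
  | zero => simp [qc_zero]
  | succ k ih =>
    have h := qc_succ k
    have : 0 < ((k : ℝ) + 1) * qc (k + 1) := by rw [h]; positivity
    exact pos_of_mul_pos_right this (by positivity)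

lemma qc_eq (k : ℕ) : qc (k + 1) = (1 / 2 + k) / (k + 1) * qc k := by
  have h := qc_succ k
  field_simp
  linarith

lemma qc_sq_bound (k : ℕ) : qc k ^ 2 * (2 * k + 1) ≤ 1 := by
  induction k with
  | zero => simp [qc_zero]
  | succ k ih =>
    refine le_trans ?_ ih
    rw [qc_eq, mul_pow]
    have hq := qc_pos k
    have : ((1 / 2 + k) / (k + 1)) ^ 2 * (2 * ((k : ℝ) + 1) + 1) ≤ 2 * k + 1 := by
      rw [div_pow, div_mul_eq_mul_div, div_le_iff₀ (by positivity)]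
      have : (0 : ℝ) ≤ k := by positivity
      nlinarith
    push_cast
    nlinarith [mul_le_mul_of_nonneg_left this (sq_nonneg (qc k))]

/-- The ratio of coefficients. -/
noncomputable def ec (k : ℕ) : ℝ := qc k * Real.sqrt (k + 1 / 4) / 4

lemma ec_pos (k : ℕ) : 0 < ec k := by
  have := qc_pos k
  unfold ec; positivity

lemma ec_sq (k : ℕ) : ec k ^ 2 = qc k ^ 2 * (k + 1 / 4) / 16 := by
  unfold ec
  rw [div_pow, mul_pow, Real.sq_sqrt (by positivity)]
  norm_num

lemma ec_zero : ec 0 = 1 / 8 := by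
  have h : ec 0 ^ 2 = (1 / 8) ^ 2 := by rw [ec_sq, qc_zero]; norm_num
  exact (pow_left_inj₀ (ec_pos 0).le (by norm_num) (by norm_num)).1 h

lemma ec_strictMono : StrictMono ec := by
  refine strictMono_nat_of_lt_succ fun k => ?_
  refine lt_of_pow_lt_pow_left₀ 2 (ec_pos _).le ?_
  rw [ec_sq, ec_sq, qc_eq, mul_pow]
  have hq := qc_pos k
  have : (k : ℝ) + 1 / 4 < ((1 / 2 + k) / (k + 1)) ^ 2 * (((k : ℝ) + 1) + 1 / 4) := by
    rw [div_pow, div_mul_eq_mul_div, lt_div_iff₀ (by positivity)]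
    have : (0 : ℝ) ≤ k := by positivity
    nlinarith
  push_cast
  nlinarith [mul_lt_mul_of_pos_left this (pow_pos hq 2)]

lemma ec_le_one (k : ℕ) : ec k ≤ 1 := by
  refine le_of_sq_le_sq ?_ (by norm_num) 
  rw [ec_sq]
  have := qc_sq_bound k
  have := sq_nonneg (qc k)
  have : (0 : ℝ) ≤ k := by positivity
  nlinarith

/-- Lerch coefficients. -/
noncomputable def bc (k : ℕ) : ℝ := 1 / ((k : ℝ) + 1 / 4) ^ (3 / 2 : ℝ)

lemma bc_pos (k : ℕ) : 0 < bc k := by unfold bc; positivity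

lemma bc_summable : Summable bc := by
  have := (Real.summable_one_div_nat_add_rpow (1 / 4) (3 / 2)).2 (by norm_num)
  refine this.congr fun k => ?_
  rw [abs_of_pos (by positivity)]
  rfl

lemma ec_mul_bc (k : ℕ) : ec k * bc k = qc k / (4 * k + 1) := by
  unfold ec bc
  have h : (0 : ℝ) < k + 1 / 4 := by positivity
  have : ((k : ℝ) + 1 / 4) ^ (3 / 2 : ℝ) = (k + 1 / 4) * Real.sqrt (k + 1 / 4) := by
    rw [show (3 / 2 : ℝ) = 1 + 1 / 2 by norm_num, Real.rpow_add h, Real.rpow_one,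
      Real.sqrt_eq_rpow]
  rw [this]
  have hs : 0 < Real.sqrt (k + 1 / 4) := Real.sqrt_pos.2 h
  have h4 : (4 * k + 1 : ℝ) = 4 * (k + 1 / 4) := by ring
  rw [h4]
  generalize Real.sqrt ((k : ℝ) + 1 / 4) = s at *
  generalize (k : ℝ) + 1 / 4 = y at *
  field_simp

lemma ac_summable : Summable fun k => ec k * bc k :=
  bc_summable.of_nonneg_of_le (fun k => (mul_pos (ec_pos k) (bc_pos k)).le)
    fun k => mul_le_of_le_one_left (bc_pos k).le (ec_le_one k)

lemma lerch_hasSum (z : ℝ) (h0 : 0 ≤ z) (h1 : z ≤ 1) :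
    HasSum (fun k => bc k * z ^ k) (lerchPhi z (3 / 2) (1 / 4)) := by
  have hs : Summable fun k => bc k * z ^ k :=
    bc_summable.of_nonneg_of_le (fun k => mul_nonneg (bc_pos k).le (pow_nonneg h0 k))
      fun k => mul_le_of_le_one_right (bc_pos k).le (pow_le_one₀ h0 h1)
  have : lerchPhi z (3 / 2) (1 / 4) = ∑' k, bc k * z ^ k := by
    unfold lerchPhi bc
    congr 1; ext k; ring
  rw [this]; exact hs.hasSum

lemma binom_hasSum (u : ℝ) (h0 : 0 ≤ u) (h1 : u < 1) :
    HasSum (fun k => qc k * u ^ k) (1 / Real.sqrt (1 - u)) := by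
  have h := (Real.one_div_one_sub_rpow_hasFPowerSeriesOnBall_zero (1 / 2)).hasSum (y := u) (by
    rw [← ENNReal.ofReal_one, Metric.eball_ofReal]
    simp [abs_of_nonneg h0, h1])
  simp only [zero_add, ← Real.sqrt_eq_rpow] at h
  have hf : (fun k => qc k * u ^ k) = fun n => (FormalMultilinearSeries.ofScalars ℝ
      (fun n : ℕ => Ring.choose (1 / 2 + (n : ℝ) - 1) n) n) fun _ => u := by
    ext k
    simp [qc, Ring.multichoose_eq, mul_comm]
  rw [hf]
  exact h

lemma arcsl_hasSum (x : ℝ) (h0 : 0 < x) (h1 : x ≤ 1) :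
    HasSum (fun k => x * (ec k * bc k * (x ^ 4) ^ k)) (arcsl x) := by
  have hint : ∀ k : ℕ, ∫ t in (0:ℝ)..x, qc k * (t ^ 4) ^ k
      = x * (ec k * bc k * (x ^ 4) ^ k) := by
    intro k
    simp only [← pow_mul]
    rw [intervalIntegral.integral_const_mul, integral_pow, ec_mul_bc]
    push_cast
    rw [zero_pow (by omega)]
    field_simp
    ring
  have hI : ∀ k : ℕ, Integrable (fun t : ℝ => qc k * (t ^ 4) ^ k)
      (volume.restrict (Set.Ioc 0 x)) := fun k =>
    (Continuous.intervalIntegrable (by fun_prop) 0 x).1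
  have hn : ∀ (k : ℕ) (t : ℝ), ‖qc k * (t ^ 4) ^ k‖ = qc k * (t ^ 4) ^ k := fun k t =>
    Real.norm_of_nonneg (mul_nonneg (qc_pos k).le (by positivity))
  have hS : Summable fun k : ℕ => ∫ t in Set.Ioc 0 x, ‖qc k * (t ^ 4) ^ k‖ := by
    simp only [hn]
    simp only [← intervalIntegral.integral_of_le h0.le, hint]
    refine Summable.mul_left _ ?_
    refine ac_summable.of_nonneg_of_le (fun k => ?_) fun k => ?_
    · exact mul_nonneg (mul_pos (ec_pos k) (bc_pos k)).le (by positivity)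
    · exact mul_le_of_le_one_right (mul_pos (ec_pos k) (bc_pos k)).le
        (pow_le_one₀ (by positivity) (pow_le_one₀ h0.le h1))
  have h := hasSum_integral_of_summable_integral_norm hI hS
  simp only [← intervalIntegral.integral_of_le h0.le, hint] at h
  have he : arcsl x = ∫ t in (0:ℝ)..x, ∑' k : ℕ, qc k * (t ^ 4) ^ k := by
    unfold arcsl
    refine intervalIntegral.integral_congr_ae ?_
    have hne : ∀ᵐ t : ℝ, t ≠ x := by simp [ae_iff]
    filter_upwards [hne] with t ht hm
    rw [Set.uIoc_of_le h0.le] at hm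
    have htx : t < x := lt_of_le_of_ne hm.2 ht
    exact (binom_hasSum (t ^ 4) (by positivity)
      (pow_lt_one₀ hm.1.le (htx.trans_le h1) (by norm_num))).tsum_eq.symm
  rw [he]; exact h

theorem arcsl_sharp_bounds (x : ℝ) (hx0 : 0 < x) (hx1 : x < 1) :
    (1 / 8) * x * lerchPhi (x ^ 4) (3 / 2) (1 / 4) < arcsl x ∧
      arcsl x <
        (arcsl 1 / lerchPhi 1 (3 / 2) (1 / 4)) * x * lerchPhi (x ^ 4) (3 / 2) (1 / 4) := by
  have hz0 : 0 < x ^ 4 := by positivity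
  have hz1 : x ^ 4 < 1 := pow_lt_one₀ hx0.le hx1 (by norm_num)
  have hA := arcsl_hasSum x hx0 hx1.le
  have hA1 := arcsl_hasSum 1 one_pos le_rfl
  have hB := lerch_hasSum (x ^ 4) hz0.le hz1.le
  have hB1 := lerch_hasSum 1 zero_le_one le_rfl
  simp only [one_pow, mul_one, one_mul] at hA1 hB1
  generalize x ^ 4 = z at *
  have hBpos : 0 < lerchPhi 1 (3 / 2) (1 / 4) :=
    hasSum_lt (i := 0) (fun k => (bc_pos k).le) (bc_pos 0) (hasSum_zero (α := ℝ) (β := ℕ)) hB1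
  constructor
  · have hl := hB.mul_left (1 / 8 * x)
    refine hasSum_lt (i := 1) (fun k => ?_) ?_ hl hA
    · have : 1 / 8 ≤ ec k := ec_zero ▸ ec_strictMono.monotone (Nat.zero_le k)
      have h2 : 0 ≤ x * (bc k * z ^ k) :=
        mul_nonneg hx0.le (mul_nonneg (bc_pos k).le (by positivity))
      nlinarith [mul_le_mul_of_nonneg_right this h2]
    · have : 1 / 8 < ec 1 := ec_zero ▸ ec_strictMono zero_lt_one
      have h2 : 0 < x * (bc 1 * z ^ 1) :=
        mul_pos hx0 (mul_pos (bc_pos 1) (by positivity))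
      nlinarith [mul_lt_mul_of_pos_right this h2]
  · set l := arcsl 1 / lerchPhi 1 (3 / 2) (1 / 4) with hl
    have hD1 : HasSum (fun k => (ec k - l) * bc k) 0 := by
      have := hA1.sub (hB1.mul_left l)
      rw [hl, div_mul_cancel₀ _ hBpos.ne', sub_self, ← hl] at this
      simpa only [sub_mul] using this
    have h0 : ec 0 < l := by
      by_contra! hc
      have : (0 : ℝ) < 0 := hasSum_lt (i := 1) (fun k => ?_) ?_ (hasSum_zero (α := ℝ) (β := ℕ)) hD1
      · exact lt_irrefl _ this
      · exact mul_nonneg (sub_nonneg.2 (hc.trans (ec_strictMono.monotone (Nat.zero_le k))))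
          (bc_pos k).le
      · exact mul_pos (sub_pos.2 (hc.trans_lt (ec_strictMono zero_lt_one))) (bc_pos 1)
    have hex : ∃ m, l ≤ ec m := by
      by_contra! hc
      have : (0 : ℝ) < 0 := hasSum_lt (i := 0) (fun k => ?_) ?_ hD1 (hasSum_zero (α := ℝ) (β := ℕ))
      · exact lt_irrefl _ this
      · exact mul_nonpos_of_nonpos_of_nonneg (sub_nonpos.2 (hc k).le) (bc_pos k).le
      · exact mul_neg_of_neg_of_pos (sub_neg.2 (hc 0)) (bc_pos 0)
    obtain ⟨m, hm, hmin⟩ : ∃ m, l ≤ ec m ∧ ∀ k < m, ec k < l := by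
      classical
      exact ⟨Nat.find hex, Nat.find_spec hex, fun k hk => not_le.1 (Nat.find_min hex hk)⟩
    have hm0 : m ≠ 0 := by rintro rfl; exact absurd h0 (not_lt.2 hm)
    have hD := hA.sub (hB.mul_left (l * x))
    have hE := hD1.mul_left (x * z ^ m)
    rw [mul_zero] at hE
    rw [← sub_neg]
    refine hasSum_lt (i := 0) (fun k => ?_) ?_ hD hE
    · have hb := bc_pos k
      have : (ec k - l) * z ^ k ≤ (ec k - l) * z ^ m := by
        rcases lt_or_ge k m with hk | hk
        · exact mul_le_mul_of_nonpos_left (pow_le_pow_of_le_one hz0.le hz1.le hk.le)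
            (sub_nonpos.2 (hmin k hk).le)
        · exact mul_le_mul_of_nonneg_left (pow_le_pow_of_le_one hz0.le hz1.le hk)
            (sub_nonneg.2 (hm.trans (ec_strictMono.monotone hk)))
      have := mul_le_mul_of_nonneg_left this (mul_pos hx0 hb).le
      nlinarith
    · have hb := bc_pos 0
      have : (ec 0 - l) * z ^ 0 < (ec 0 - l) * z ^ m := by
        refine mul_lt_mul_of_neg_left ?_ (sub_neg.2 h0)
        rw [pow_zero]; exact pow_lt_one₀ hz0.le hz1 hm0
      have := mul_lt_mul_of_pos_left this (mul_pos hx0 hb)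
      nlinarith
end

section
/- The limit of F(x) = arcsl(x)/(x·Φ(x⁴, 3/2, 1/4)) as x → 0⁺ equals 1/8; consequently the constant factor α = 1/8 in the lower bound α·x·Φ(x⁴, 3/2, 1/4) < arcsl(x) for 0 < x < 1 cannot be replaced by any larger constant. -/
theorem aux_rpow : ((1:ℝ) / 4) ^ ((3:ℝ) / 2) = 1 / 8 := by
  have h : ((1:ℝ) / 4) = (1 / 2) ^ (2:ℝ) := by norm_num
  rw [h, ← Real.rpow_mul (by norm_num)]
  norm_num

theorem aux_lerch_zero : lerchPhi 0 (3 / 2) (1 / 4) = 8 := by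
  unfold lerchPhi
  rw [tsum_eq_single 0]
  · simp only [pow_zero, Nat.cast_zero, zero_add, aux_rpow]
    norm_num
  · intro k hk
    simp [hk]

theorem aux_lerch_cont : ContinuousAt (fun z : ℝ => lerchPhi z (3 / 2) (1 / 4)) 0 := by
  have h : ContinuousOn (fun z : ℝ => lerchPhi z (3 / 2) (1 / 4)) (Set.Icc (-(1/2)) (1/2)) := by
    unfold lerchPhi
    refine continuousOn_tsum (u := fun k : ℕ => (1 / 2 : ℝ) ^ k * 8) ?_ ?_ ?_
    · intro k
      fun_prop
    · exact (summable_geometric_of_lt_one (by norm_num) (by norm_num)).mul_right 8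
    · intro k z hz
      have hz' : |z| ≤ 1 / 2 := abs_le.mpr ⟨hz.1, hz.2⟩
      have hk : (0:ℝ) ≤ k := Nat.cast_nonneg k
      have h1 : (1:ℝ) / 8 ≤ ((k:ℝ) + 1 / 4) ^ ((3:ℝ) / 2) := by
        rw [← aux_rpow]
        exact Real.rpow_le_rpow (by norm_num) (by linarith) (by norm_num)
      have h0 : (0:ℝ) < ((k:ℝ) + 1 / 4) ^ ((3:ℝ) / 2) := by linarith
      rw [norm_div, norm_pow, Real.norm_eq_abs, Real.norm_eq_abs, abs_of_pos h0, div_le_iff₀ h0]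
      have h2 : |z| ^ k ≤ (1 / 2) ^ k := pow_le_pow_left₀ (abs_nonneg z) hz' k
      have h3 : (0:ℝ) < (1 / 2) ^ k := by positivity
      nlinarith
  exact h.continuousAt (Icc_mem_nhds (by norm_num) (by norm_num))

theorem aux_arcsl_deriv : HasDerivAt arcsl 1 0 := by
  have hm : Measurable (fun t : ℝ => 1 / Real.sqrt (1 - t ^ 4)) := by fun_prop
  have hc : ContinuousAt (fun t : ℝ => 1 / Real.sqrt (1 - t ^ 4)) 0 := by
    apply ContinuousAt.div
    · fun_prop
    · fun_prop
    · norm_num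
  have h := intervalIntegral.integral_hasDerivAt_right (a := (0:ℝ)) (b := 0)
    (f := fun t : ℝ => 1 / Real.sqrt (1 - t ^ 4)) (by simp)
    (hm.stronglyMeasurable.stronglyMeasurableAtFilter) hc
  have e : arcsl = fun u => ∫ t in (0:ℝ)..u, 1 / Real.sqrt (1 - t ^ 4) := rfl
  rw [e]
  simpa using h

theorem aux_tendsto :
    Filter.Tendsto (fun x : ℝ => arcsl x / (x * lerchPhi (x ^ 4) (3 / 2) (1 / 4)))
      (nhdsWithin 0 (Set.Ioi 0)) (nhds (1 / 8)) := by
  have h1 : Filter.Tendsto (fun x : ℝ => arcsl x / x) (nhdsWithin 0 (Set.Ioi 0)) (nhds 1) := by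
    have h := aux_arcsl_deriv.tendsto_slope_zero_right
    have h0 : arcsl 0 = 0 := by simp [arcsl]
    refine h.congr fun x => ?_
    simp [h0, div_eq_inv_mul]
  have h2 : Filter.Tendsto (fun x : ℝ => lerchPhi (x ^ 4) (3 / 2) (1 / 4))
      (nhdsWithin 0 (Set.Ioi 0)) (nhds 8) := by
    have hp : Filter.Tendsto (fun x : ℝ => x ^ 4) (nhds 0) (nhds 0) := by
      have : Continuous (fun x : ℝ => x ^ 4) := by fun_prop
      simpa using this.tendsto 0
    have h := aux_lerch_cont.tendsto.comp hp
    rw [aux_lerch_zero] at h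
    exact h.mono_left nhdsWithin_le_nhds
  refine (h1.div h2 (by norm_num)).congr fun x => ?_
  simp only [Pi.div_apply, div_div]

theorem tendsto_ratio_zero_and_alpha_sharp :
    Filter.Tendsto (fun x : ℝ => arcsl x / (x * lerchPhi (x ^ 4) (3 / 2) (1 / 4)))
      (nhdsWithin 0 (Set.Ioi 0)) (nhds (1 / 8)) ∧
    ∀ α : ℝ, (∀ x : ℝ, 0 < x → x < 1 →
        α * x * lerchPhi (x ^ 4) (3 / 2) (1 / 4) < arcsl x) → α ≤ 1 / 8 := by
  refine ⟨aux_tendsto, fun α hα => ?_⟩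
  refine ge_of_tendsto aux_tendsto ?_
  filter_upwards [Ioo_mem_nhdsGT (zero_lt_one' ℝ)] with x hx
  have hpos : 0 < lerchPhi (x ^ 4) (3 / 2) (1 / 4) := by
    have hx0 := hx.1
    have hs : Summable (fun k : ℕ => (x ^ 4) ^ k / ((k : ℝ) + 1 / 4) ^ ((3:ℝ) / 2)) := by
      refine Summable.of_nonneg_of_le (fun k => by positivity) (fun k => ?_)
        ((summable_geometric_of_lt_one (r := x ^ 4) (by positivity)
          (pow_lt_one₀ hx0.le hx.2 (by norm_num))).mul_right 8)
      have hk : (0:ℝ) ≤ k := Nat.cast_nonneg k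
      have h1 : (1:ℝ) / 8 ≤ ((k:ℝ) + 1 / 4) ^ ((3:ℝ) / 2) := by
        rw [← aux_rpow]
        exact Real.rpow_le_rpow (by norm_num) (by linarith) (by norm_num)
      rw [div_le_iff₀ (by linarith)]
      have h3 : (0:ℝ) < (x ^ 4) ^ k := by positivity
      nlinarith
    exact hs.tsum_pos (fun k => by positivity) 0 (by positivity)
  rw [le_div_iff₀ (mul_pos hx.1 hpos), ← mul_assoc]
  exact (hα x hx.1 hx.2).le
end

section
/- The limit of F(x) = arcsl(x)/(x·Φ(x⁴, 3/2, 1/4)) as x → 1⁻ equals arcsl(1)/Φ(1, 3/2, 1/4); consequently the constant factor β = arcsl(1)/Φ(1, 3/2, 1/4) in the upper bound arcsl(x) < β·x·Φ(x⁴, 3/2, 1/4) for 0 < x < 1 cannot be replaced by any smaller constant. -/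
theorem arcsl_integrable :
    IntervalIntegrable (fun t : ℝ => 1 / Real.sqrt (1 - t ^ 4)) MeasureTheory.volume 0 1 := by
  have h1 : IntervalIntegrable (fun t : ℝ => t ^ (-(1/2) : ℝ)) MeasureTheory.volume 1 0 :=
    intervalIntegral.intervalIntegrable_rpow' (by norm_num)
  have h2 : IntervalIntegrable (fun t : ℝ => (1 - t) ^ (-(1/2) : ℝ)) MeasureTheory.volume 0 1 := by
    have := h1.comp_sub_left 1
    simpa using this
  refine h2.mono_fun ?_ ?_
  · apply Measurable.aestronglyMeasurable
    fun_prop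
  · rw [Set.uIoc_of_le zero_le_one]
    refine (MeasureTheory.ae_restrict_iff' measurableSet_Ioc).2 (Filter.Eventually.of_forall ?_)
    intro t ht
    obtain ⟨h0, h1⟩ := ht
    have ha : 0 ≤ 1 - t := by linarith
    rcases eq_or_lt_of_le h1 with rfl | hlt
    · simp
    have hb : 0 < 1 - t := by linarith
    have hle : 1 - t ≤ 1 - t ^ 4 := by
      have : t ^ 4 ≤ t := pow_le_of_le_one h0.le h1 (by norm_num)
      linarith
    beta_reduce
    rw [Real.rpow_neg ha, ← Real.sqrt_eq_rpow, Real.norm_of_nonneg (by positivity),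
      Real.norm_of_nonneg (by positivity), one_div]
    exact inv_anti₀ (Real.sqrt_pos.2 hb) (Real.sqrt_le_sqrt hle)

theorem arcsl_tendsto :
    Filter.Tendsto arcsl (nhdsWithin 1 (Set.Iio 1)) (nhds (arcsl 1)) := by
  have h := intervalIntegral.continuousOn_primitive_interval'
    (μ := MeasureTheory.volume) arcsl_integrable (by simp : (0:ℝ) ∈ Set.uIcc (0:ℝ) 1)
  rw [Set.uIcc_of_le zero_le_one] at h
  have h2 := h 1 (by simp)
  refine Filter.Tendsto.mono_left h2 ?_
  rw [← nhdsWithin_Ioo_eq_nhdsLT (zero_lt_one)]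
  exact nhdsWithin_mono _ Set.Ioo_subset_Icc_self

theorem lerch_summable :
    Summable (fun k : ℕ => 1 / ((k : ℝ) + 1 / 4) ^ (3 / 2 : ℝ)) := by
  have := (Real.summable_one_div_nat_add_rpow (1/4) (3/2)).2 (by norm_num)
  refine this.congr fun k => ?_
  rw [abs_of_pos (by positivity)]

theorem lerch_term_le {z : ℝ} (hz : z ∈ Set.Icc (0:ℝ) 1) (k : ℕ) :
    ‖z ^ k / ((k : ℝ) + 1 / 4) ^ (3 / 2 : ℝ)‖ ≤ 1 / ((k : ℝ) + 1 / 4) ^ (3 / 2 : ℝ) := by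
  have := hz.1
  rw [Real.norm_of_nonneg (by positivity)]
  gcongr
  exact pow_le_one₀ hz.1 hz.2

theorem lerch_cont :
    ContinuousOn (fun z => lerchPhi z (3 / 2) (1 / 4)) (Set.Icc 0 1) := by
  unfold lerchPhi
  refine continuousOn_tsum (fun k => ?_) lerch_summable (fun k z hz => lerch_term_le hz k)
  exact ((continuous_pow k).div_const _).continuousOn

theorem lerch_pos {z : ℝ} (hz : z ∈ Set.Icc (0:ℝ) 1) : 0 < lerchPhi z (3 / 2) (1 / 4) := by
  have hs : Summable (fun k : ℕ => z ^ k / ((k : ℝ) + 1 / 4) ^ (3 / 2 : ℝ)) :=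
    lerch_summable.of_norm_bounded (lerch_term_le hz)
  have := hz.1
  refine hs.tsum_pos (fun k => by positivity) 0 ?_
  rw [pow_zero]
  positivity

theorem tendsto_ratio_one_and_beta_sharp :
    Filter.Tendsto (fun x : ℝ => arcsl x / (x * lerchPhi (x ^ 4) (3 / 2) (1 / 4)))
      (nhdsWithin 1 (Set.Iio 1)) (nhds (arcsl 1 / lerchPhi 1 (3 / 2) (1 / 4))) ∧
    ∀ β : ℝ, (∀ x : ℝ, 0 < x → x < 1 →
        arcsl x < β * x * lerchPhi (x ^ 4) (3 / 2) (1 / 4)) →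
      arcsl 1 / lerchPhi 1 (3 / 2) (1 / 4) ≤ β := by
  have hev : ∀ᶠ x : ℝ in nhdsWithin 1 (Set.Iio 1), x ∈ Set.Ioo (0:ℝ) 1 :=
    Ioo_mem_nhdsLT zero_lt_one
  have hmem : ∀ x ∈ Set.Ioo (0:ℝ) 1, x ^ 4 ∈ Set.Icc (0:ℝ) 1 := fun x hx =>
    ⟨pow_nonneg hx.1.le 4, pow_le_one₀ hx.1.le hx.2.le⟩
  have hid : Filter.Tendsto (fun x : ℝ => x) (nhdsWithin 1 (Set.Iio 1)) (nhds 1) :=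
    Filter.tendsto_id.mono_left nhdsWithin_le_nhds
  have hpow : Filter.Tendsto (fun x : ℝ => x ^ 4) (nhdsWithin 1 (Set.Iio 1))
      (nhdsWithin 1 (Set.Icc 0 1)) := by
    refine tendsto_nhdsWithin_iff.2 ⟨?_, hev.mono hmem⟩
    simpa using hid.pow 4
  have hL : Filter.Tendsto (fun x : ℝ => lerchPhi (x ^ 4) (3 / 2) (1 / 4))
      (nhdsWithin 1 (Set.Iio 1)) (nhds (lerchPhi 1 (3 / 2) (1 / 4))) :=
    Filter.Tendsto.comp (lerch_cont 1 (by simp)) hpow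
  have hlim : Filter.Tendsto (fun x : ℝ => arcsl x / (x * lerchPhi (x ^ 4) (3 / 2) (1 / 4)))
      (nhdsWithin 1 (Set.Iio 1)) (nhds (arcsl 1 / lerchPhi 1 (3 / 2) (1 / 4))) := by
    have hm := hid.mul hL
    rw [one_mul] at hm
    exact arcsl_tendsto.div hm (lerch_pos (by simp)).ne'
  refine ⟨hlim, fun β hβ => le_of_tendsto hlim ?_⟩
  filter_upwards [hev] with x hx
  rw [div_le_iff₀ (mul_pos hx.1 (lerch_pos (hmem x hx))), ← mul_assoc]
  exact (hβ x hx.1 hx.2).le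
end

section
/- For all real x with 0 < x < 1, the ratio arcsl(x)/(x·Φ(x⁴, 3/2, 1/4)) lies strictly between 1/8 and 1/7. -/
/-- Coefficients of the power series of `1 / √(1 - y)`. -/
noncomputable def lemCoef : ℕ → ℝ
  | 0 => 1
  | n + 1 => lemCoef n * ((2 * n + 1) / (2 * n + 2))

lemma lemCoef_pos (n : ℕ) : 0 < lemCoef n := by
  induction n with
  | zero => simp [lemCoef]
  | succ n ih => rw [lemCoef]; positivity

lemma lemCoef_eq (n : ℕ) : Ring.choose ((1 / 2 : ℝ) + n - 1) n = lemCoef n := by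
  rw [← Ring.multichoose_eq]
  have key : ∀ n : ℕ, (n.factorial : ℝ) * Ring.multichoose (1 / 2 : ℝ) n
      = (ascPochhammer ℝ n).eval (1 / 2) := by
    intro n
    have := Ring.factorial_nsmul_multichoose_eq_ascPochhammer (1 / 2 : ℝ) n
    rw [nsmul_eq_mul, Polynomial.ascPochhammer_smeval_eq_eval] at this
    exact this
  induction n with
  | zero => simp [lemCoef]
  | succ n ih =>
    have h1 := key (n + 1)
    rw [ascPochhammer_succ_eval, ← key n, ih, Nat.factorial_succ] at h1
    push_cast at h1
    have hf : (n.factorial : ℝ) ≠ 0 := by positivity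
    have hn : (n : ℝ) + 1 ≠ 0 := by positivity
    have h2 : ((n : ℝ) + 1) * Ring.multichoose (1 / 2 : ℝ) (n + 1)
        = lemCoef n * (1 / 2 + n) := by
      apply mul_left_cancel₀ hf
      linarith
    rw [lemCoef]
    apply mul_left_cancel₀ hn
    rw [h2]
    field_simp
    ring

lemma hasSum_lemCoef (y : ℝ) (h0 : 0 ≤ y) (h1 : y < 1) :
    HasSum (fun n => lemCoef n * y ^ n) (1 / Real.sqrt (1 - y)) := by
  have h := Real.one_div_one_sub_rpow_hasFPowerSeriesOnBall_zero (1 / 2)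
  have hy : y ∈ Metric.eball (0 : ℝ) 1 := by
    rw [← ENNReal.ofReal_one, Metric.eball_ofReal]
    simp [abs_of_nonneg h0, h1]
  have h2 := h.hasSum hy
  rw [zero_add, ← Real.sqrt_eq_rpow] at h2
  convert! h2 using 2 with n
  rw [← lemCoef_eq]
  simp [FormalMultilinearSeries.ofScalars, mul_comm]

lemma lemCoef_lower (n : ℕ) : 1 ≤ lemCoef n ^ 2 * (4 * n + 1) := by
  induction n with
  | zero => simp [lemCoef]
  | succ n ih =>
    refine ih.trans ?_
    rw [lemCoef, mul_pow, mul_assoc]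
    gcongr
    rw [div_pow, div_mul_eq_mul_div, le_div_iff₀ (by positivity)]
    push_cast
    have : (0 : ℝ) ≤ n := by positivity
    nlinarith

lemma lemCoef_upper_big (n : ℕ) :
    lemCoef (n + 12) ^ 2 * (4 * (n + 12 : ℕ) + 2) < 64 / 49 := by
  induction n with
  | zero => norm_num [lemCoef]
  | succ n ih =>
    refine lt_of_le_of_lt ?_ ih
    rw [show n + 1 + 12 = (n + 12) + 1 by ring, lemCoef, mul_pow, mul_assoc]
    generalize n + 12 = m
    gcongr
    rw [div_pow, div_mul_eq_mul_div, div_le_iff₀ (by positivity)]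
    push_cast
    have : (0 : ℝ) ≤ m := by positivity
    nlinarith

lemma lemCoef_upper (n : ℕ) : lemCoef n ^ 2 * (4 * n + 1) < 64 / 49 := by
  by_cases h : n < 12
  · interval_cases n <;> norm_num [lemCoef]
  · obtain ⟨m, rfl⟩ := Nat.exists_eq_add_of_le' (not_lt.mp h)
    refine lt_of_le_of_lt ?_ (lemCoef_upper_big m)
    gcongr
    norm_num

lemma hasSum_arcsl (x : ℝ) (hx0 : 0 < x) (hx1 : x < 1) :
    HasSum (fun n : ℕ => lemCoef n * (x * (x ^ 4) ^ n / (4 * n + 1))) (arcsl x) := by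
  have hx4 : x ^ 4 < 1 := pow_lt_one₀ hx0.le hx1 (by norm_num)
  have hs := (hasSum_lemCoef (x ^ 4) (by positivity) hx4).summable
  have h := intervalIntegral.hasSum_integral_of_dominated_convergence
    (μ := MeasureTheory.volume) (a := 0) (b := x)
    (F := fun n t => lemCoef n * (t ^ 4) ^ n) (f := fun t => 1 / Real.sqrt (1 - t ^ 4))
    (fun n _ => lemCoef n * (x ^ 4) ^ n)
    (fun n => by
      apply Continuous.aestronglyMeasurable
      fun_prop)
    (fun n => by
      filter_upwards with t ht
      rw [Set.uIoc_of_le hx0.le] at ht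
      have := ht.1
      have := ht.2
      have := lemCoef_pos n
      rw [Real.norm_of_nonneg (by positivity)]
      gcongr)
    (by
      filter_upwards with t ht
      exact hs)
    (by simp)
    (by
      filter_upwards with t ht
      rw [Set.uIoc_of_le hx0.le] at ht
      exact hasSum_lemCoef _ (by positivity)
        (pow_lt_one₀ ht.1.le (ht.2.trans_lt hx1) (by norm_num)))
  rw [arcsl]
  convert! h using 2 with n
  rw [intervalIntegral.integral_const_mul]
  simp only [← pow_mul]
  rw [integral_pow]
  push_cast
  simp [pow_succ, mul_comm]

theorem ratio_between (x : ℝ) (hx0 : 0 < x) (hx1 : x < 1) :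
    1 / 8 < arcsl x / (x * lerchPhi (x ^ 4) (3 / 2) (1 / 4)) ∧
      arcsl x / (x * lerchPhi (x ^ 4) (3 / 2) (1 / 4)) < 1 / 7 := by
  have ha := hasSum_arcsl x hx0 hx1
  have hrp : ∀ n : ℕ, ((n : ℝ) + 1 / 4) ^ (3 / 2 : ℝ)
      = (4 * n + 1) * Real.sqrt (4 * n + 1) / 8 := by
    intro n
    have hp : (0 : ℝ) < (n : ℝ) + 1 / 4 := by positivity
    rw [show (3 / 2 : ℝ) = 1 + 1 / 2 by norm_num, Real.rpow_add hp, Real.rpow_one,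
      ← Real.sqrt_eq_rpow, show (4 * n + 1 : ℝ) = 2 ^ 2 * (n + 1 / 4) by ring,
      Real.sqrt_mul (by norm_num), Real.sqrt_sq (by norm_num)]
    ring
  set b : ℕ → ℝ := fun n => (x ^ 4) ^ n / ((n : ℝ) + 1 / 4) ^ (3 / 2 : ℝ) with hb
  -- ratio bounds
  have hs1 : ∀ n : ℕ, 1 ≤ lemCoef n * Real.sqrt (4 * n + 1) := by
    intro n
    have h1 := lemCoef_lower n
    have h2 : Real.sqrt (4 * n + 1) ^ 2 = 4 * n + 1 := Real.sq_sqrt (by positivity)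
    have h3 := lemCoef_pos n
    rw [← h2, ← mul_pow] at h1
    exact (one_le_sq_iff₀ (by positivity)).mp h1
  have hs2 : ∀ n : ℕ, lemCoef n * Real.sqrt (4 * n + 1) < 8 / 7 := by
    intro n
    have h1 := lemCoef_upper n
    have h2 : Real.sqrt (4 * n + 1) ^ 2 = 4 * n + 1 := Real.sq_sqrt (by positivity)
    rw [← h2, ← mul_pow] at h1
    refine lt_of_pow_lt_pow_left₀ 2 (by norm_num) (h1.trans_eq (by norm_num))
  have hab : ∀ n : ℕ, lemCoef n * (x * (x ^ 4) ^ n / (4 * n + 1))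
      = (lemCoef n * Real.sqrt (4 * n + 1) / 8) * (x * b n) := by
    intro n
    simp only [hb, hrp]
    have : Real.sqrt (4 * n + 1) ≠ 0 := by positivity
    field_simp
  have hbpos : ∀ n, 0 < x * b n := by
    intro n; simp only [hb]; positivity
  have hle : ∀ n, 1 / 8 * (x * b n) ≤ lemCoef n * (x * (x ^ 4) ^ n / (4 * n + 1)) := by
    intro n
    rw [hab]
    have := hs1 n
    exact mul_le_mul_of_nonneg_right (by linarith) (hbpos n).le
  have hlt : ∀ n, lemCoef n * (x * (x ^ 4) ^ n / (4 * n + 1)) < 1 / 7 * (x * b n) := by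
    intro n
    rw [hab]
    have := hs2 n
    exact mul_lt_mul_of_pos_right (by linarith) (hbpos n)
  have hsb8 : Summable fun n => 1 / 8 * (x * b n) :=
    Summable.of_nonneg_of_le (fun n => by have := hbpos n; positivity) hle ha.summable
  have hsb : Summable fun n => x * b n := by
    simpa using hsb8.mul_left 8
  have hB : HasSum (fun n => x * b n) (x * lerchPhi (x ^ 4) (3 / 2) (1 / 4)) := by
    have h := hsb.hasSum
    rwa [tsum_mul_left] at h
  have hpos : 0 < x * lerchPhi (x ^ 4) (3 / 2) (1 / 4) := by
    rw [← hB.tsum_eq]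
    exact hsb.tsum_pos (fun n => (hbpos n).le) 0 (hbpos 0)
  constructor
  · rw [lt_div_iff₀ hpos]
    refine hasSum_lt hle (i := 1) ?_ (hB.mul_left (1 / 8)) ha
    rw [hab]
    refine mul_lt_mul_of_pos_right ?_ (hbpos 1)
    have h5 : (2 : ℝ) < Real.sqrt 5 := by
      rw [Real.lt_sqrt (by norm_num)]; norm_num
    norm_num [lemCoef]
    linarith
  · rw [div_lt_iff₀ hpos]
    exact hasSum_lt (fun n => (hlt n).le) (hlt 0) ha (hB.mul_left (1 / 7))
end

section
/- The lemniscate constant satisfies arcsl(1) = (1/4)·B(1/4, 1/2), where B is the Euler beta function; equivalently arcsl(1) = Γ(1/4)²/(4√(2π)). -/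
/-- The Euler beta function: `B(x, y) = ∫₀¹ t^(x-1) (1-t)^(y-1) dt`. -/
noncomputable def eulerBeta (x y : ℝ) : ℝ :=
  ∫ t in (0:ℝ)..1, t ^ (x - 1) * (1 - t) ^ (y - 1)

theorem arcsl_aux : arcsl 1 = (1 / 4) * eulerBeta (1 / 4) (1 / 2) := by
  have himg : (fun t : ℝ => t ^ 4) '' Set.Ioo 0 1 = Set.Ioo 0 1 := by
    ext y
    constructor
    · rintro ⟨t, ⟨h0, h1⟩, rfl⟩
      exact ⟨by positivity, pow_lt_one₀ h0.le h1 (by norm_num)⟩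
    · rintro ⟨h0, h1⟩
      refine ⟨y ^ (1 / 4 : ℝ), ⟨by positivity, Real.rpow_lt_one h0.le h1 (by norm_num)⟩, ?_⟩
      show (y ^ (1 / 4 : ℝ)) ^ 4 = y
      rw [← Real.rpow_natCast, ← Real.rpow_mul h0.le]
      norm_num
  have hinj : Set.InjOn (fun t : ℝ => t ^ 4) (Set.Ioo 0 1) := by
    intro a ha b hb hab
    exact (pow_left_inj₀ ha.1.le hb.1.le (by norm_num)).1 hab
  have key := MeasureTheory.integral_image_eq_integral_abs_deriv_smul
    (s := Set.Ioo (0:ℝ) 1) (f := fun t : ℝ => t ^ 4) (f' := fun t => 4 * t ^ 3)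
    measurableSet_Ioo
    (fun x _ => by simpa using (hasDerivAt_pow 4 x).hasDerivWithinAt) hinj
    (fun t : ℝ => t ^ ((1 / 4 : ℝ) - 1) * (1 - t) ^ ((1 / 2 : ℝ) - 1))
  rw [himg] at key
  unfold arcsl eulerBeta
  rw [intervalIntegral.integral_of_le zero_le_one, intervalIntegral.integral_of_le zero_le_one,
    MeasureTheory.integral_Ioc_eq_integral_Ioo, MeasureTheory.integral_Ioc_eq_integral_Ioo,
    key, ← MeasureTheory.integral_const_mul]
  refine MeasureTheory.setIntegral_congr_fun measurableSet_Ioo ?_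
  rintro t ⟨h0, h1⟩
  have h4 : 0 < 1 - t ^ 4 := by
    have := pow_lt_one₀ h0.le h1 (n := 4) (by norm_num)
    linarith
  have e1 : (t ^ 4) ^ ((1 / 4 : ℝ) - 1) = (t ^ 3)⁻¹ := by
    rw [← Real.rpow_natCast t 4, ← Real.rpow_mul h0.le, ← Real.rpow_natCast t 3,
      ← Real.rpow_neg h0.le]
    norm_num
  have e2 : (1 - t ^ 4) ^ ((1 / 2 : ℝ) - 1) = (Real.sqrt (1 - t ^ 4))⁻¹ := by
    rw [Real.sqrt_eq_rpow, ← Real.rpow_neg h4.le]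
    norm_num
  have hs : 0 < Real.sqrt (1 - t ^ 4) := Real.sqrt_pos.2 h4
  simp only [smul_eq_mul]
  rw [e1, e2, abs_of_pos (by positivity)]
  field_simp

theorem eulerBeta_aux : eulerBeta (1 / 4) (1 / 2) =
    Real.Gamma (1 / 4) * Real.Gamma (1 / 2) / Real.Gamma (3 / 4) := by
  have h := ProbabilityTheory.beta_eq_betaIntegralReal (1 / 4) (1 / 2) (by norm_num) (by norm_num)
  have h2 : ((eulerBeta (1 / 4) (1 / 2) : ℝ) : ℂ) =
      Complex.betaIntegral ((1 / 4 : ℝ) : ℂ) ((1 / 2 : ℝ) : ℂ) := by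
    unfold eulerBeta Complex.betaIntegral
    rw [← intervalIntegral.integral_ofReal]
    refine intervalIntegral.integral_congr ?_
    intro t ht
    rw [Set.uIcc_of_le zero_le_one] at ht
    have h1 : 0 ≤ 1 - t := by linarith [ht.2]
    simp only [Complex.ofReal_mul]
    rw [Complex.ofReal_cpow ht.1, Complex.ofReal_cpow h1]
    push_cast
    rfl
  rw [← h2, Complex.ofReal_re] at h
  rw [← h, ProbabilityTheory.beta]
  norm_num

theorem arcsl_one_eq :
    arcsl 1 = (1 / 4) * eulerBeta (1 / 4) (1 / 2) ∧
      arcsl 1 = Real.Gamma (1 / 4) ^ 2 / (4 * Real.sqrt (2 * Real.pi)) := by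
  refine ⟨arcsl_aux, ?_⟩
  rw [arcsl_aux, eulerBeta_aux, Real.Gamma_one_half_eq]
  have hr := Real.Gamma_mul_Gamma_one_sub (1 / 4)
  rw [show Real.pi * (1 / 4) = Real.pi / 4 by ring, Real.sin_pi_div_four,
    show (1 - 1 / 4 : ℝ) = 3 / 4 by norm_num] at hr
  have hg : 0 < Real.Gamma (3 / 4) := Real.Gamma_pos_of_pos (by norm_num)
  have hp := Real.pi_pos
  rw [Real.sqrt_mul (by norm_num)]
  have hsp : 0 < Real.sqrt Real.pi := Real.sqrt_pos.2 hp
  have hs2 : 0 < Real.sqrt 2 := by positivity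
  have q1 := Real.sq_sqrt hp.le
  have q2 := Real.sq_sqrt (show (0:ℝ) ≤ 2 by norm_num)
  generalize Real.sqrt Real.pi = a at *
  generalize Real.sqrt 2 = b at *
  rw [← q1] at hr
  have hr' : Real.Gamma (1 / 4) * Real.Gamma (3 / 4) = a ^ 2 * b := by
    rw [hr]
    field_simp
    linarith
  have e : Real.Gamma (1 / 4) ^ 2 * Real.Gamma (3 / 4) = Real.Gamma (1 / 4) * (a ^ 2 * b) := by
    rw [← hr']
    ring
  generalize Real.Gamma (1 / 4) = g at *
  generalize Real.Gamma (3 / 4) = k at *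
  rw [← mul_div_assoc, div_eq_div_iff hg.ne' (by positivity)]
  linear_combination -e
end

section
/- (Monotone form of l'Hôpital's rule.) Let u, v : [a, b] → ℝ be continuous on [a, b] and differentiable on (a, b), with v'(x) ≠ 0 for all x in (a, b). If u'/v' is strictly increasing on (a, b), then the function x ↦ (u(x) − u(a))/(v(x) − v(a)) is strictly increasing on (a, b). -/
/-- Monotone form of l'Hôpital's rule. -/
theorem monotone_lhopital (a b : ℝ) (hab : a < b) (u v u' v' : ℝ → ℝ)
    (hu : ContinuousOn u (Set.Icc a b)) (hv : ContinuousOn v (Set.Icc a b))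
    (hu' : ∀ x ∈ Set.Ioo a b, HasDerivAt u (u' x) x)
    (hv' : ∀ x ∈ Set.Ioo a b, HasDerivAt v (v' x) x)
    (hv'ne : ∀ x ∈ Set.Ioo a b, v' x ≠ 0)
    (hmono : StrictMonoOn (fun x => u' x / v' x) (Set.Ioo a b)) :
    StrictMonoOn (fun x => (u x - u a) / (v x - v a)) (Set.Ioo a b) := by
  intro x hx y hy hxy
  have key : ∀ p q, a ≤ p → p < q → q < b →
      (∃ c ∈ Set.Ioo p q, u q - u p = u' c / v' c * (v q - v p)) ∧
      ∃ e ∈ Set.Ioo p q, v q - v p = v' e * (q - p) := by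
    intro p q hp hpq hq
    have hcc : Set.Icc p q ⊆ Set.Icc a b := Set.Icc_subset_Icc hp hq.le
    have hoo : Set.Ioo p q ⊆ Set.Ioo a b := Set.Ioo_subset_Ioo hp hq.le
    constructor
    · obtain ⟨c, hc, h⟩ := exists_ratio_hasDerivAt_eq_ratio_slope u u' hpq (hu.mono hcc)
        (fun z hz => hu' z (hoo hz)) v v' (hv.mono hcc) (fun z hz => hv' z (hoo hz))
      refine ⟨c, hc, ?_⟩
      have := hv'ne c (hoo hc)
      field_simp
      linarith
    · obtain ⟨e, he, h⟩ := exists_hasDerivAt_eq_slope v v' hpq (hv.mono hcc)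
        (fun z hz => hv' z (hoo hz))
      refine ⟨e, he, ?_⟩
      rw [h, div_mul_cancel₀ _ (sub_pos.2 hpq).ne']
  obtain ⟨⟨c, hc, h1⟩, e, he, h2⟩ := key a x le_rfl hx.1 hx.2
  obtain ⟨⟨d, hd, h3⟩, f, hf, h4⟩ := key x y hx.1.le hxy hy.2
  have hrs : u' c / v' c < u' d / v' d :=
    hmono ⟨hc.1, hc.2.trans hx.2⟩ ⟨hx.1.trans hd.1, hd.2.trans hy.2⟩ (hc.2.trans hd.1)
  have heI : e ∈ Set.Ioo a b := ⟨he.1, he.2.trans hx.2⟩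
  have hfI : f ∈ Set.Ioo a b := ⟨hx.1.trans hf.1, hf.2.trans hy.2⟩
  have hxa : 0 < x - a := sub_pos.2 hx.1
  have hyx : 0 < y - x := sub_pos.2 hxy
  generalize u' c / v' c = r at *
  generalize u' d / v' d = s at *
  have e1 : u y - u a = r * (v x - v a) + s * (v y - v x) := by linarith
  have e2 : v y - v a = (v x - v a) + (v y - v x) := by ring
  show (u x - u a) / (v x - v a) < (u y - u a) / (v y - v a)
  rw [e1, e2, h1]
  rcases hasDerivWithinAt_forall_lt_or_forall_gt_of_forall_ne (convex_Ioo a b)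
    (fun z hz => (hv' z hz).hasDerivWithinAt) hv'ne with hs | hs
  · have p1 : v x - v a < 0 := by rw [h2]; exact mul_neg_of_neg_of_pos (hs e heI) hxa
    have p2 : v y - v x < 0 := by rw [h4]; exact mul_neg_of_neg_of_pos (hs f hfI) hyx
    rw [mul_div_cancel_right₀ _ p1.ne, lt_div_iff_of_neg (add_neg p1 p2)]
    nlinarith
  · have p1 : 0 < v x - v a := by rw [h2]; exact mul_pos (hs e heI) hxa
    have p2 : 0 < v y - v x := by rw [h4]; exact mul_pos (hs f hfI) hyx
    rw [mul_div_cancel_right₀ _ p1.ne', lt_div_iff₀ (add_pos p1 p2)]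
    nlinarith
end

section
/- For all real x with 0 < x < 1, one has (1/8)·x·Φ(x⁴, 3/2, 1/4) < arcsl(x) < (1/4)·x·Φ(x⁴, 3/2, 1/4). -/
/-- Taylor coefficients of `1/√(1-u)`. -/
noncomputable def slc (n : ℕ) : ℝ := Ring.multichoose (1 / 2 : ℝ) n

lemma slc_zero : slc 0 = 1 := by simp [slc]

lemma slc_succ (n : ℕ) : ((n : ℝ) + 1) * slc (n + 1) = ((n : ℝ) + 1 / 2) * slc n := by
  have h1 := Ring.factorial_nsmul_multichoose_eq_ascPochhammer (1 / 2 : ℝ) n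
  have h2 := Ring.factorial_nsmul_multichoose_eq_ascPochhammer (1 / 2 : ℝ) (n + 1)
  rw [ascPochhammer_succ_right, Polynomial.smeval_mul, ← h1, Polynomial.smeval_add,
    Polynomial.smeval_X, Polynomial.smeval_natCast] at h2
  simp only [nsmul_eq_mul, Nat.factorial_succ, Nat.cast_mul, pow_one, pow_zero, mul_one] at h2
  have hf : (n.factorial : ℝ) ≠ 0 := by positivity
  push_cast at h2
  unfold slc
  apply mul_left_cancel₀ hf
  linear_combination h2

lemma slc_pos (n : ℕ) : 0 < slc n := by
  induction n with
  | zero => simp [slc_zero]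
  | succ n ih =>
    have h := slc_succ n
    have : 0 < ((n : ℝ) + 1) * slc (n + 1) := by rw [h]; positivity
    exact pos_of_mul_pos_right this (by positivity)

lemma slc_lower (n : ℕ) : 1 ≤ (4 * (n : ℝ) + 1) * slc n ^ 2 := by
  induction n with
  | zero => simp [slc_zero]
  | succ n ih =>
    have h : slc (n + 1) = ((n : ℝ) + 1 / 2) / ((n : ℝ) + 1) * slc n := by
      rw [div_mul_eq_mul_div, eq_div_iff (by positivity), ← slc_succ]; ring
    refine ih.trans ?_
    rw [h, mul_pow, ← mul_assoc]
    refine mul_le_mul_of_nonneg_right ?_ (by positivity)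
    rw [div_pow, mul_div_assoc', le_div_iff₀ (by positivity)]
    push_cast
    nlinarith

lemma slc_upper (n : ℕ) : (2 * (n : ℝ) + 1) * slc n ^ 2 ≤ 1 := by
  induction n with
  | zero => simp [slc_zero]
  | succ n ih =>
    have h : slc (n + 1) = ((n : ℝ) + 1 / 2) / ((n : ℝ) + 1) * slc n := by
      rw [div_mul_eq_mul_div, eq_div_iff (by positivity), ← slc_succ]; ring
    refine le_trans ?_ ih
    rw [h, mul_pow, ← mul_assoc]
    refine mul_le_mul_of_nonneg_right ?_ (by positivity)
    rw [div_pow, mul_div_assoc', div_le_iff₀ (by positivity)]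
    push_cast
    have : (0 : ℝ) ≤ n := by positivity
    nlinarith [sq_nonneg (n : ℝ)]

lemma slc_le_one (n : ℕ) : slc n ≤ 1 := by
  have := slc_upper n
  have h := slc_pos n
  have hn : (0 : ℝ) ≤ n := by positivity
  nlinarith [mul_nonneg hn (sq_nonneg (slc n))]

lemma slc_one : slc 1 = 1 / 2 := by
  simp [slc]

lemma slc_hasSum (u : ℝ) (h0 : 0 ≤ u) (h1 : u < 1) :
    HasSum (fun n => slc n * u ^ n) (1 / Real.sqrt (1 - u)) := by
  have h := (Real.one_div_one_sub_rpow_hasFPowerSeriesOnBall_zero (1 / 2)).hasSum (y := u)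
    (by simp [Metric.mem_eball, edist_eq_enorm_sub, enorm_eq_nnnorm]
        rw [← NNReal.coe_lt_coe]; simpa [abs_of_nonneg h0] using h1)
  simp only [zero_add, ← Real.sqrt_eq_rpow] at h
  have e : (fun n => slc n * u ^ n) = fun n => (FormalMultilinearSeries.ofScalars ℝ
      (fun n : ℕ => Ring.choose (1 / 2 + (n : ℝ) - 1) n) n) fun _ => u := by
    funext n
    simp [slc, Ring.multichoose_eq, FormalMultilinearSeries.ofScalars, mul_comm]
  rw [e]
  exact h

lemma arcsl_hasSum_s13 (x : ℝ) (hx0 : 0 < x) (hx1 : x < 1) :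
    HasSum (fun n : ℕ => slc n * (x ^ (4 * n + 1) / (4 * (n : ℝ) + 1))) (arcsl x) := by
  have key := intervalIntegral.hasSum_integral_of_dominated_convergence (μ := MeasureTheory.volume)
    (a := 0) (b := x)
    (F := fun (n : ℕ) (t : ℝ) => slc n * t ^ (4 * n)) (f := fun t => 1 / Real.sqrt (1 - t ^ 4))
    (fun n _ => (x ^ 4) ^ n) (fun n => by fun_prop)
    (fun n => Filter.Eventually.of_forall (fun t ht => by
      rw [Set.uIoc_of_le hx0.le] at ht
      have h0 := ht.1.le
      rw [Real.norm_of_nonneg (mul_nonneg (slc_pos n).le (by positivity)), ← pow_mul]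
      have := pow_le_pow_left₀ h0 ht.2 (4 * n)
      have h2 : 0 ≤ t ^ (4 * n) := by positivity
      nlinarith [slc_le_one n]))
    (Filter.Eventually.of_forall (fun t ht =>
      summable_geometric_of_lt_one (by positivity) (pow_lt_one₀ hx0.le hx1 (by norm_num))))
    (by simp)
    (Filter.Eventually.of_forall (fun t ht => by
      rw [Set.uIoc_of_le hx0.le] at ht
      have := slc_hasSum (t ^ 4) (by positivity)
        (pow_lt_one₀ ht.1.le (ht.2.trans_lt hx1) (by norm_num))
      simpa only [← pow_mul] using this))
  unfold arcsl
  have e : (fun n : ℕ => slc n * (x ^ (4 * n + 1) / (4 * (n : ℝ) + 1))) =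
      fun n : ℕ => ∫ t in (0:ℝ)..x, slc n * t ^ (4 * n) := by
    funext n
    rw [intervalIntegral.integral_const_mul, integral_pow]
    simp
  rw [e]
  exact key

lemma lerch_term (n : ℕ) : ((n : ℝ) + 1 / 4) ^ (3 / 2 : ℝ)
    = ((n : ℝ) + 1 / 4) * Real.sqrt ((n : ℝ) + 1 / 4) := by
  rw [show (3 / 2 : ℝ) = 1 + 1 / 2 by norm_num, Real.rpow_add (by positivity), Real.rpow_one,
    ← Real.sqrt_eq_rpow]

lemma term_eq (x : ℝ) (n : ℕ) (r : ℝ) :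
    r / 4 * x * ((x ^ 4) ^ n / ((n : ℝ) + 1 / 4) ^ (3 / 2 : ℝ)) =
      (r / Real.sqrt ((n : ℝ) + 1 / 4)) * (x ^ (4 * n + 1) / (4 * (n : ℝ) + 1)) := by
  rw [lerch_term, ← pow_mul, pow_succ]
  have : Real.sqrt ((n : ℝ) + 1 / 4) ≠ 0 := by positivity
  have h4 : (n : ℝ) + 1 / 4 = (4 * (n : ℝ) + 1) / 4 := by ring
  have h5 : 4 * (n : ℝ) + 1 ≠ 0 := by positivity
  set s := Real.sqrt ((n : ℝ) + 1 / 4)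
  rw [h4]
  field_simp

lemma slc_low (n : ℕ) : (1 / 2) / Real.sqrt ((n : ℝ) + 1 / 4) ≤ slc n := by
  have h := slc_pos n
  rw [div_le_iff₀ (by positivity)]
  apply (pow_le_pow_iff_left₀ (by norm_num) (by positivity) two_ne_zero).1
  rw [mul_pow, Real.sq_sqrt (by positivity)]
  nlinarith [slc_lower n]

lemma slc_up (n : ℕ) : slc n < 1 / Real.sqrt ((n : ℝ) + 1 / 4) := by
  have h := slc_pos n
  rw [lt_div_iff₀ (by positivity)]
  apply lt_of_pow_lt_pow_left₀ 2 (by positivity)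
  rw [mul_pow, Real.sq_sqrt (by positivity)]
  have hn : (0 : ℝ) ≤ n := by positivity
  nlinarith [slc_upper n, mul_nonneg hn (sq_nonneg (slc n)), pow_pos h 2]

lemma slc_low_one : (1 / 2) / Real.sqrt (((1 : ℕ) : ℝ) + 1 / 4) < slc 1 := by
  rw [slc_one, div_lt_iff₀ (by positivity)]
  have : 1 < Real.sqrt (((1 : ℕ) : ℝ) + 1 / 4) := by
    rw [Real.lt_sqrt (by norm_num)]; norm_num
  linarith

theorem mahmoud_agarwal_bounds (x : ℝ) (hx0 : 0 < x) (hx1 : x < 1) :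
    (1 / 8) * x * lerchPhi (x ^ 4) (3 / 2) (1 / 4) < arcsl x ∧
      arcsl x < (1 / 4) * x * lerchPhi (x ^ 4) (3 / 2) (1 / 4) := by
  have hA := arcsl_hasSum_s13 x hx0 hx1
  have hp : ∀ n : ℕ, 0 < x ^ (4 * n + 1) / (4 * (n : ℝ) + 1) := fun n => by positivity
  have hS : Summable (fun n : ℕ => (x ^ 4) ^ n / ((n : ℝ) + 1 / 4) ^ (3 / 2 : ℝ)) := by
    have h8 : Summable (fun n : ℕ =>
        (1 / 2) / 4 * x * ((x ^ 4) ^ n / ((n : ℝ) + 1 / 4) ^ (3 / 2 : ℝ))) := by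
      refine Summable.of_nonneg_of_le (fun n => by positivity) (fun n => ?_) hA.summable
      rw [term_eq]
      exact mul_le_mul_of_nonneg_right (slc_low n) (hp n).le
    exact (summable_mul_left_iff (by positivity)).1 h8
  have hL : ∀ r : ℝ, HasSum (fun n : ℕ =>
      (r / Real.sqrt ((n : ℝ) + 1 / 4)) * (x ^ (4 * n + 1) / (4 * (n : ℝ) + 1)))
      (r / 4 * x * lerchPhi (x ^ 4) (3 / 2) (1 / 4)) := by
    intro r
    simp only [← term_eq]
    exact hS.hasSum.mul_left _
  constructor
  · have := hasSum_lt (i := 1) (fun n => mul_le_mul_of_nonneg_right (slc_low n) (hp n).le)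
      (mul_lt_mul_of_pos_right slc_low_one (hp 1)) (hL (1 / 2)) hA
    rwa [show (1 / 2 / 4 : ℝ) = 1 / 8 by norm_num] at this
  · exact hasSum_lt (i := 0) (fun n => mul_le_mul_of_nonneg_right (slc_up n).le (hp n).le)
      (mul_lt_mul_of_pos_right (slc_up 0) (hp 0)) hA (hL 1)
end
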